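/- Let N be a finite-dimensional simple left P_k(Ē)-module. Exactly one of the following holds: (1) N ≅ coker(ν_i) for some non-sink vertex i ∈ E^0, in which case L_k(E) ⊗_{P_k(Ē)} N = 0; or (2) N is not isomorphic to coker(ν_i) for any non-sink i ∈ E^0, in which case L_k(E) ⊗_{P_k(Ē)} N is a simple left L_k(E)-module. -/

import Mathlib

namespace LPA

/-- A finite quiver: finite sets of vertices and arrows with source and target maps. -/
structure FinQuiver : Type 1 where
  V : Type
  A : Type
  [fintypeV : Fintype V]
  [decEqV : DecidableEq V]
  [fintypeA : Fintype A]
  [decEqA : DecidableEq A]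
  src : A → V
  tgt : A → V

attribute [instance] FinQuiver.fintypeV FinQuiver.decEqV FinQuiver.fintypeA FinQuiver.decEqA

/-- The inverse quiver: all arrows reversed. -/
def FinQuiver.rev (Q : FinQuiver) : FinQuiver where
  V := Q.V
  A := Q.A
  fintypeV := Q.fintypeV
  decEqV := Q.decEqV
  fintypeA := Q.fintypeA
  decEqA := Q.decEqA
  src := Q.tgt
  tgt := Q.src

/-- Generators of the path algebra: a trivial path `p v` for each vertex and an arrow `e` for
each arrow. -/
inductive PathGen (Q : FinQuiver) : Type
  | vertex (v : Q.V) : PathGen Q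
  | edge (e : Q.A) : PathGen Q

/-- Defining relations of the path algebra: the trivial paths are pairwise orthogonal
idempotents summing to `1`, and `p (src e) * e = e = e * p (tgt e)`. -/
inductive PathRel (k : Type) [CommRing k] (Q : FinQuiver) :
    FreeAlgebra k (PathGen Q) → FreeAlgebra k (PathGen Q) → Prop
  | vertex_mul_self (v : Q.V) :
      PathRel k Q (FreeAlgebra.ι k (PathGen.vertex v) * FreeAlgebra.ι k (PathGen.vertex v))
        (FreeAlgebra.ι k (PathGen.vertex v))
  | vertex_mul_ne (v w : Q.V) (h : v ≠ w) :
      PathRel k Q (FreeAlgebra.ι k (PathGen.vertex v) * FreeAlgebra.ι k (PathGen.vertex w)) 0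
  | sum_vertex :
      PathRel k Q (∑ v : Q.V, FreeAlgebra.ι k (PathGen.vertex v)) 1
  | src_mul (e : Q.A) :
      PathRel k Q
        (FreeAlgebra.ι k (PathGen.vertex (Q.src e)) * FreeAlgebra.ι k (PathGen.edge e))
        (FreeAlgebra.ι k (PathGen.edge e))
  | mul_tgt (e : Q.A) :
      PathRel k Q
        (FreeAlgebra.ι k (PathGen.edge e) * FreeAlgebra.ι k (PathGen.vertex (Q.tgt e)))
        (FreeAlgebra.ι k (PathGen.edge e))

/-- The path algebra `P_k(Q)` of a finite quiver `Q`, presented by generators and relations. -/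
def PathAlg (k : Type) [CommRing k] (Q : FinQuiver) : Type :=
  RingQuot (PathRel k Q)

variable (k : Type) [CommRing k] (Q : FinQuiver)

noncomputable instance : Ring (PathAlg k Q) :=
  inferInstanceAs (Ring (RingQuot (PathRel k Q)))

noncomputable instance : Algebra k (PathAlg k Q) :=
  inferInstanceAs (Algebra k (RingQuot (PathRel k Q)))

/-- The quotient map from the free algebra onto the path algebra. -/
noncomputable def PathAlg.mk : FreeAlgebra k (PathGen Q) →ₐ[k] PathAlg k Q :=
  RingQuot.mkAlgHom k (PathRel k Q)

/-- The trivial path (vertex idempotent) `p v` in the path algebra. -/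
noncomputable def PathAlg.p (v : Q.V) : PathAlg k Q :=
  PathAlg.mk k Q (FreeAlgebra.ι k (PathGen.vertex v))

/-- The arrow `e` in the path algebra. -/
noncomputable def PathAlg.arrow (e : Q.A) : PathAlg k Q :=
  PathAlg.mk k Q (FreeAlgebra.ι k (PathGen.edge e))

theorem PathAlg.mk_rel {x y : FreeAlgebra k (PathGen Q)} (h : PathRel k Q x y) :
    PathAlg.mk k Q x = PathAlg.mk k Q y :=
  RingQuot.mkAlgHom_rel k h

theorem PathAlg.p_mul_self (v : Q.V) : PathAlg.p k Q v * PathAlg.p k Q v = PathAlg.p k Q v := by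
  have h := PathAlg.mk_rel k Q (PathRel.vertex_mul_self v)
  simpa [map_mul, PathAlg.p] using h

theorem PathAlg.p_mul_ne (v w : Q.V) (hvw : v ≠ w) :
    PathAlg.p k Q v * PathAlg.p k Q w = 0 := by
  have h := PathAlg.mk_rel k Q (PathRel.vertex_mul_ne v w hvw)
  simpa [map_mul, PathAlg.p] using h

theorem PathAlg.sum_p : (∑ v : Q.V, PathAlg.p k Q v) = 1 := by
  have h := PathAlg.mk_rel k Q (PathRel.sum_vertex)
  simpa [map_sum, PathAlg.p] using h

theorem PathAlg.arrow_mul_tgt (e : Q.A) :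
    PathAlg.arrow k Q e * PathAlg.p k Q (Q.tgt e) = PathAlg.arrow k Q e := by
  have h := PathAlg.mk_rel k Q (PathRel.mul_tgt e)
  simpa [map_mul, PathAlg.p, PathAlg.arrow] using h

theorem PathAlg.src_mul_arrow (e : Q.A) :
    PathAlg.p k Q (Q.src e) * PathAlg.arrow k Q e = PathAlg.arrow k Q e := by
  have h := PathAlg.mk_rel k Q (PathRel.src_mul e)
  simpa [map_mul, PathAlg.p, PathAlg.arrow] using h

/-- The set of vertices `{p v | v ∈ Q.V}` of the path algebra, as a finite set. -/
noncomputable def vertexFinset : Finset (PathAlg k Q) :=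
  letI := Classical.decEq (PathAlg k Q)
  Finset.univ.image (PathAlg.p k Q)

end LPA

namespace LPA

/-- Generators of the Leavitt path algebra: vertex idempotents, arrows, and ghost arrows. -/
inductive LGen (Q : FinQuiver) : Type
  | vertex (v : Q.V) : LGen Q
  | edge (e : Q.A) : LGen Q
  | ghost (e : Q.A) : LGen Q

/-- Defining relations of the Leavitt path algebra `L_k(E)`: (V), (E1), (E2), (CK1), (CK2),
together with `∑ p_v = 1`. -/
inductive LeavittRel (k : Type) [CommRing k] (Q : FinQuiver) :
    FreeAlgebra k (LGen Q) → FreeAlgebra k (LGen Q) → Prop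
  | vertex_mul_self (v : Q.V) :
      LeavittRel k Q (FreeAlgebra.ι k (LGen.vertex v) * FreeAlgebra.ι k (LGen.vertex v))
        (FreeAlgebra.ι k (LGen.vertex v))
  | vertex_mul_ne (v w : Q.V) (h : v ≠ w) :
      LeavittRel k Q (FreeAlgebra.ι k (LGen.vertex v) * FreeAlgebra.ι k (LGen.vertex w)) 0
  | sum_vertex :
      LeavittRel k Q (∑ v : Q.V, FreeAlgebra.ι k (LGen.vertex v)) 1
  | src_mul (e : Q.A) :
      LeavittRel k Q (FreeAlgebra.ι k (LGen.vertex (Q.src e)) * FreeAlgebra.ι k (LGen.edge e))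
        (FreeAlgebra.ι k (LGen.edge e))
  | mul_tgt (e : Q.A) :
      LeavittRel k Q (FreeAlgebra.ι k (LGen.edge e) * FreeAlgebra.ι k (LGen.vertex (Q.tgt e)))
        (FreeAlgebra.ι k (LGen.edge e))
  | tgt_mul_ghost (e : Q.A) :
      LeavittRel k Q (FreeAlgebra.ι k (LGen.vertex (Q.tgt e)) * FreeAlgebra.ι k (LGen.ghost e))
        (FreeAlgebra.ι k (LGen.ghost e))
  | ghost_mul_src (e : Q.A) :
      LeavittRel k Q (FreeAlgebra.ι k (LGen.ghost e) * FreeAlgebra.ι k (LGen.vertex (Q.src e)))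
        (FreeAlgebra.ι k (LGen.ghost e))
  | ghost_mul_edge_self (e : Q.A) :
      LeavittRel k Q (FreeAlgebra.ι k (LGen.ghost e) * FreeAlgebra.ι k (LGen.edge e))
        (FreeAlgebra.ι k (LGen.vertex (Q.tgt e)))
  | ghost_mul_edge_ne (e f : Q.A) (h : e ≠ f) :
      LeavittRel k Q (FreeAlgebra.ι k (LGen.ghost e) * FreeAlgebra.ι k (LGen.edge f)) 0
  | cuntz_krieger (v : Q.V) (h : ∃ e : Q.A, Q.src e = v) :
      LeavittRel k Q
        (∑ e ∈ Finset.univ.filter (fun e : Q.A => Q.src e = v),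
          FreeAlgebra.ι k (LGen.edge e) * FreeAlgebra.ι k (LGen.ghost e))
        (FreeAlgebra.ι k (LGen.vertex v))

/-- The Leavitt path algebra `L_k(E)`. -/
def Leavitt (k : Type) [CommRing k] (Q : FinQuiver) : Type :=
  RingQuot (LeavittRel k Q)

variable (k : Type) [CommRing k] (Q : FinQuiver)

noncomputable instance : Ring (Leavitt k Q) :=
  inferInstanceAs (Ring (RingQuot (LeavittRel k Q)))

noncomputable instance : Algebra k (Leavitt k Q) :=
  inferInstanceAs (Algebra k (RingQuot (LeavittRel k Q)))

/-- The quotient map from the free algebra onto the Leavitt path algebra. -/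
noncomputable def Leavitt.mk : FreeAlgebra k (LGen Q) →ₐ[k] Leavitt k Q :=
  RingQuot.mkAlgHom k (LeavittRel k Q)

/-- The vertex idempotent `p v` in the Leavitt path algebra. -/
noncomputable def Leavitt.p (v : Q.V) : Leavitt k Q :=
  Leavitt.mk k Q (FreeAlgebra.ι k (LGen.vertex v))

/-- The arrow `e` in the Leavitt path algebra. -/
noncomputable def Leavitt.ed (e : Q.A) : Leavitt k Q :=
  Leavitt.mk k Q (FreeAlgebra.ι k (LGen.edge e))

/-- The ghost arrow `ē` in the Leavitt path algebra. -/
noncomputable def Leavitt.gh (e : Q.A) : Leavitt k Q :=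
  Leavitt.mk k Q (FreeAlgebra.ι k (LGen.ghost e))

theorem Leavitt.mk_rel {x y : FreeAlgebra k (LGen Q)} (h : LeavittRel k Q x y) :
    Leavitt.mk k Q x = Leavitt.mk k Q y :=
  RingQuot.mkAlgHom_rel k h

theorem Leavitt.p_mul_self (v : Q.V) : Leavitt.p k Q v * Leavitt.p k Q v = Leavitt.p k Q v := by
  have h := Leavitt.mk_rel k Q (LeavittRel.vertex_mul_self v)
  simpa [map_mul, Leavitt.p] using h

theorem Leavitt.p_mul_ne (v w : Q.V) (hvw : v ≠ w) :
    Leavitt.p k Q v * Leavitt.p k Q w = 0 := by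
  have h := Leavitt.mk_rel k Q (LeavittRel.vertex_mul_ne v w hvw)
  simpa [map_mul, Leavitt.p] using h

theorem Leavitt.sum_p : (∑ v : Q.V, Leavitt.p k Q v) = 1 := by
  have h := Leavitt.mk_rel k Q (LeavittRel.sum_vertex)
  simpa [map_sum, Leavitt.p] using h

theorem Leavitt.tgt_mul_gh (e : Q.A) :
    Leavitt.p k Q (Q.tgt e) * Leavitt.gh k Q e = Leavitt.gh k Q e := by
  have h := Leavitt.mk_rel k Q (LeavittRel.tgt_mul_ghost e)
  simpa [map_mul, Leavitt.p, Leavitt.gh] using h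

theorem Leavitt.gh_mul_src (e : Q.A) :
    Leavitt.gh k Q e * Leavitt.p k Q (Q.src e) = Leavitt.gh k Q e := by
  have h := Leavitt.mk_rel k Q (LeavittRel.ghost_mul_src e)
  simpa [map_mul, Leavitt.p, Leavitt.gh] using h

/-- The canonical embedding `P_k(Ē) → L_k(E)` of the path algebra of the inverse quiver into
the Leavitt path algebra, sending `p v ↦ p v` and each reversed arrow `ē ↦ ē`. -/
noncomputable def revToLeavitt : PathAlg k Q.rev →ₐ[k] Leavitt k Q :=
  RingQuot.liftAlgHom k ⟨((FreeAlgebra.lift k fun g =>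
    match g with
    | PathGen.vertex v => Leavitt.p k Q v
    | PathGen.edge e => Leavitt.gh k Q e : FreeAlgebra k (PathGen Q.rev) →ₐ[k] Leavitt k Q)), by
      intro x y h
      induction h with
      | vertex_mul_self v =>
          simp only [map_mul, FreeAlgebra.lift_ι_apply]
          exact Leavitt.p_mul_self k Q v
      | vertex_mul_ne v w h =>
          simp only [map_mul, map_zero, FreeAlgebra.lift_ι_apply]
          exact Leavitt.p_mul_ne k Q v w h
      | sum_vertex =>
          simp only [map_sum, map_one, FreeAlgebra.lift_ι_apply]
          exact Leavitt.sum_p k Q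
      | src_mul e =>
          simp only [map_mul, FreeAlgebra.lift_ι_apply]
          exact Leavitt.tgt_mul_gh k Q e
      | mul_tgt e =>
          simp only [map_mul, FreeAlgebra.lift_ι_apply]
          exact Leavitt.gh_mul_src k Q e⟩

/-- The canonical embedding `P_k(E) → L_k(E)` of the path algebra into the Leavitt path
algebra, sending `p v ↦ p v` and each arrow `e ↦ e`. -/
noncomputable def pathToLeavitt : PathAlg k Q →ₐ[k] Leavitt k Q :=
  RingQuot.liftAlgHom k ⟨((FreeAlgebra.lift k fun g =>
    match g with
    | PathGen.vertex v => Leavitt.p k Q v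
    | PathGen.edge e => Leavitt.ed k Q e : FreeAlgebra k (PathGen Q) →ₐ[k] Leavitt k Q)), by
      intro x y h
      induction h with
      | vertex_mul_self v =>
          simp only [map_mul, FreeAlgebra.lift_ι_apply]
          exact Leavitt.p_mul_self k Q v
      | vertex_mul_ne v w h =>
          simp only [map_mul, map_zero, FreeAlgebra.lift_ι_apply]
          exact Leavitt.p_mul_ne k Q v w h
      | sum_vertex =>
          simp only [map_sum, map_one, FreeAlgebra.lift_ι_apply]
          exact Leavitt.sum_p k Q
      | src_mul e =>
          simp only [map_mul, FreeAlgebra.lift_ι_apply]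
          have h := Leavitt.mk_rel k Q (LeavittRel.src_mul e)
          simpa [map_mul, Leavitt.p, Leavitt.ed] using h
      | mul_tgt e =>
          simp only [map_mul, FreeAlgebra.lift_ι_apply]
          have h := Leavitt.mk_rel k Q (LeavittRel.mul_tgt e)
          simpa [map_mul, Leavitt.p, Leavitt.ed] using h⟩

end LPA

namespace LPA

open TensorProduct

variable (P L : Type) [Ring P] [Ring L] (φ : P →+* L)

/-- The subgroup of relations defining the balanced tensor product `L ⊗_P M` (where `L` is a
right `P`-module via `φ` and `M` a left `P`-module) as a quotient of `L ⊗_ℤ M`. -/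
noncomputable def trel (M : Type) [AddCommGroup M] [Module P M] :
    Submodule L (TensorProduct ℤ L M) :=
  Submodule.span L
    {z | ∃ (l : L) (p : P) (m : M), z = (l * φ p) ⊗ₜ[ℤ] m - l ⊗ₜ[ℤ] (p • m)}

/-- The balanced tensor product `L ⊗_P M`, a left `L`-module. -/
abbrev TensorPhi (M : Type) [AddCommGroup M] [Module P M] : Type :=
  TensorProduct ℤ L M ⧸ trel P L φ M

/-- Functoriality of `L ⊗_P -` : the map induced on balanced tensor products by a `P`-linear
map `f : M → N`. -/
noncomputable def tmap {M N : Type} [AddCommGroup M] [Module P M] [AddCommGroup N]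
    [Module P N] (f : M →ₗ[P] N) : TensorPhi P L φ M →ₗ[L] TensorPhi P L φ N :=
  Submodule.mapQ _ _
    (TensorProduct.AlgebraTensorModule.map (LinearMap.id : L →ₗ[L] L)
      f.toAddMonoidHom.toIntLinearMap)
    (by
      refine Submodule.span_le.mpr ?_
      rintro z ⟨l, p, m, rfl⟩
      simp only [SetLike.mem_coe, Submodule.mem_comap, map_sub,
        TensorProduct.AlgebraTensorModule.map_tmul, LinearMap.id_coe, id_eq,
        AddMonoidHom.coe_toIntLinearMap, LinearMap.toAddMonoidHom_coe]
      exact Submodule.subset_span ⟨l, p, f m, by rw [f.map_smul]⟩)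

/-- `L` is flat as a right `P`-module (via `φ : P → L`): the functor `L ⊗_P -` preserves
injectivity. -/
def RightFlat : Prop :=
  ∀ (M N : Type) [AddCommGroup M] [Module P M] [AddCommGroup N] [Module P N],
    ∀ f : M →ₗ[P] N, Function.Injective f → Function.Injective (tmap P L φ f)

end LPA

namespace LPA

/-- Right multiplication by a fixed element, as an endomorphism of the left regular module. -/
noncomputable def rightMul (R : Type) [Ring R] (x : R) : R →ₗ[R] R where
  toFun y := y * x
  map_add' a b := add_mul a b x
  map_smul' r y := by simp [smul_eq_mul, mul_assoc]

variable (k : Type) [CommRing k] (Q : FinQuiver)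

/-- The principal left ideal `P_k(Ē)·p_v` of the path algebra of the inverse quiver. -/
noncomputable def pIdeal (v : Q.V) : Submodule (PathAlg k Q.rev) (PathAlg k Q.rev) :=
  LinearMap.range (rightMul (PathAlg k Q.rev) (PathAlg.p k Q.rev v))

/-- The principal left ideal `L_k(E)·p_v` of the Leavitt path algebra. -/
noncomputable def pIdealL (v : Q.V) : Submodule (Leavitt k Q) (Leavitt k Q) :=
  LinearMap.range (rightMul (Leavitt k Q) (Leavitt.p k Q v))

/-- A sink: a vertex emitting no arrows. -/
def IsSink (v : Q.V) : Prop := ∀ e : Q.A, Q.src e ≠ v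

/-- For a non-sink vertex `i` (and, degenerately, for a sink, where the domain is trivial),
the left `P_k(Ē)`-module homomorphism
`ν_i : ⊕_{e ∈ s⁻¹(i)} P_k(Ē)·p_{r(e)} → P_k(Ē)·p_i`, `(r_e) ↦ ∑ r_e·ē`. -/
noncomputable def nu (i : Q.V) :
    ((e : {e : Q.A // Q.src e = i}) → ↥(pIdeal k Q (Q.tgt e.1)))
      →ₗ[PathAlg k Q.rev] ↥(pIdeal k Q i) :=
  LinearMap.codRestrict (pIdeal k Q i)
    { toFun := fun x =>
        ∑ e : {e : Q.A // Q.src e = i}, ((x e : PathAlg k Q.rev) * PathAlg.arrow k Q.rev e.1)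
      map_add' := by
        intro a b
        simp [add_mul, Finset.sum_add_distrib]
      map_smul' := by
        intro r x
        simp [smul_eq_mul, Finset.mul_sum, mul_assoc] }
    (by
      intro x
      refine ⟨∑ e : {e : Q.A // Q.src e = i},
        ((x e : PathAlg k Q.rev) * PathAlg.arrow k Q.rev e.1), ?_⟩
      simp only [rightMul, LinearMap.coe_mk, AddHom.coe_mk, Finset.sum_mul]
      refine Finset.sum_congr rfl fun e _ => ?_
      obtain ⟨e, he⟩ := e
      subst he
      rw [mul_assoc]
      congr 1
      exact PathAlg.arrow_mul_tgt k Q.rev e)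

/-- The cokernel of `ν_i`, a finite-dimensional simple `P_k(Ē)`-module. -/
abbrev CokerNu (i : Q.V) : Type :=
  ↥(pIdeal k Q i) ⧸ LinearMap.range (nu k Q i)

/-- Reachability by a (possibly trivial) path in the quiver `E`. -/
inductive Reaches : Q.V → Q.V → Prop
  | refl (v : Q.V) : Reaches v v
  | step (e : Q.A) {w : Q.V} : Reaches (Q.tgt e) w → Reaches (Q.src e) w

end LPA

namespace LPA

/-- A composition series `0 = c 0 < c 1 < … < c ℓ = M` with simple factors. -/
def IsCompSeries {R M : Type} [Ring R] [AddCommGroup M] [Module R M] (ℓ : ℕ)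
    (c : Fin (ℓ + 1) → Submodule R M) : Prop :=
  c 0 = ⊥ ∧ c (Fin.last ℓ) = ⊤ ∧
    ∀ i : Fin ℓ, c i.castSucc < c i.succ ∧
      IsSimpleModule R
        (↥(c i.succ) ⧸ Submodule.comap (c i.succ).subtype (c i.castSucc))

/-- The `i`-th factor `c (i+1) / c i` of a series of submodules. -/
abbrev SeriesFactor {R M : Type} [Ring R] [AddCommGroup M] [Module R M] {ℓ : ℕ}
    (c : Fin (ℓ + 1) → Submodule R M) (i : Fin ℓ) : Type :=
  ↥(c i.succ) ⧸ Submodule.comap (c i.succ).subtype (c i.castSucc)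

end LPA

/-!
In an `L_k(E)`-module spanned by a homomorphic image of a simple `P_k(Ē)`-module `N`, ghost arrows
carry every element into the image of `N`, and `p_v = ∑ e ē` recovers an element from its ghost
translates. Hence every nonzero submodule meets the image of `N`, and the module is simple as soon
as it is nonzero.

By the same relation, a vector of `p_v N` (`v` not a sink) that is killed by all `ē` with
`s(e) = v` dies in every `L_k(E)`-module. A simple `N` has a nonzero vector of this kind exactly
when `N ≅ coker ν_v`. If `N` has none for any `v`, then `n ↦ (l ↦ l̄ n)` embeds `N` into an
`L_k(E)`-module, that of the germs at infinity of `N`-valued functions on paths, so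
`N → L_k(E) ⊗ N` is injective.
-/

namespace LPA

section Generators

variable {k : Type} [CommRing k] {Q : FinQuiver}

@[elab_as_elim]
theorem PathAlg.induction_on {motive : PathAlg k Q → Prop} (x : PathAlg k Q)
    (scalar : ∀ c : k, motive (algebraMap k _ c)) (vertex : ∀ v, motive (PathAlg.p k Q v))
    (arrow : ∀ e, motive (PathAlg.arrow k Q e))
    (mul : ∀ a b, motive a → motive b → motive (a * b))
    (add : ∀ a b, motive a → motive b → motive (a + b)) : motive x := by
  obtain ⟨y, rfl⟩ : ∃ y, PathAlg.mk k Q y = x := RingQuot.mkAlgHom_surjective k (PathRel k Q) x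
  induction y using FreeAlgebra.induction with
  | grade0 c => simpa only [AlgHom.commutes] using scalar c
  | grade1 g => cases g with
    | vertex v => exact vertex v
    | edge e => exact arrow e
  | mul a b ha hb => simpa only [map_mul] using mul _ _ ha hb
  | add a b ha hb => simpa only [map_add] using add _ _ ha hb

@[elab_as_elim]
theorem PathAlg.rev_induction_on {motive : PathAlg k Q.rev → Prop} (x : PathAlg k Q.rev)
    (scalar : ∀ c : k, motive (algebraMap k _ c))
    (vertex : ∀ v : Q.V, motive (PathAlg.p k Q.rev v))
    (ghost : ∀ e : Q.A, motive (PathAlg.arrow k Q.rev e))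
    (mul : ∀ a b, motive a → motive b → motive (a * b))
    (add : ∀ a b, motive a → motive b → motive (a + b)) : motive x :=
  PathAlg.induction_on x scalar vertex ghost mul add

@[elab_as_elim]
theorem Leavitt.induction_on {motive : Leavitt k Q → Prop} (x : Leavitt k Q)
    (scalar : ∀ c : k, motive (algebraMap k _ c)) (vertex : ∀ v, motive (Leavitt.p k Q v))
    (edge : ∀ e, motive (Leavitt.ed k Q e)) (ghost : ∀ e, motive (Leavitt.gh k Q e))
    (mul : ∀ a b, motive a → motive b → motive (a * b))
    (add : ∀ a b, motive a → motive b → motive (a + b)) : motive x := by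
  obtain ⟨y, rfl⟩ : ∃ y, Leavitt.mk k Q y = x := RingQuot.mkAlgHom_surjective k (LeavittRel k Q) x
  induction y using FreeAlgebra.induction with
  | grade0 c => simpa only [AlgHom.commutes] using scalar c
  | grade1 g => cases g with
    | vertex v => exact vertex v
    | edge e => exact edge e
    | ghost e => exact ghost e
  | mul a b ha hb => simpa only [map_mul] using mul _ _ ha hb
  | add a b ha hb => simpa only [map_add] using add _ _ ha hb

variable (k)

theorem PathAlg.rev_p_mul_p_self (v : Q.V) :
    PathAlg.p k Q.rev v * PathAlg.p k Q.rev v = PathAlg.p k Q.rev v :=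
  PathAlg.p_mul_self k Q.rev v

theorem PathAlg.rev_p_mul_p_of_ne {v w : Q.V} (h : v ≠ w) :
    PathAlg.p k Q.rev v * PathAlg.p k Q.rev w = 0 :=
  PathAlg.p_mul_ne k Q.rev v w h

theorem PathAlg.rev_arrow_mul_p_src (e : Q.A) :
    PathAlg.arrow k Q.rev e * PathAlg.p k Q.rev (Q.src e) = PathAlg.arrow k Q.rev e :=
  PathAlg.arrow_mul_tgt k Q.rev e

theorem PathAlg.rev_p_tgt_mul_arrow (e : Q.A) :
    PathAlg.p k Q.rev (Q.tgt e) * PathAlg.arrow k Q.rev e = PathAlg.arrow k Q.rev e :=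
  PathAlg.src_mul_arrow k Q.rev e

theorem PathAlg.rev_arrow_mul_p_of_ne {e : Q.A} {v : Q.V} (h : Q.src e ≠ v) :
    PathAlg.arrow k Q.rev e * PathAlg.p k Q.rev v = 0 := by
  rw [← PathAlg.rev_arrow_mul_p_src, mul_assoc, PathAlg.rev_p_mul_p_of_ne k h, mul_zero]

theorem PathAlg.rev_p_mul_arrow_of_ne {e : Q.A} {v : Q.V} (h : v ≠ Q.tgt e) :
    PathAlg.p k Q.rev v * PathAlg.arrow k Q.rev e = 0 := by
  rw [← PathAlg.rev_p_tgt_mul_arrow, ← mul_assoc, PathAlg.rev_p_mul_p_of_ne k h, zero_mul]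

theorem Leavitt.p_mul_ed_of_ne {v : Q.V} {e : Q.A} (h : v ≠ Q.src e) :
    Leavitt.p k Q v * Leavitt.ed k Q e = 0 := by
  have hsrc : Leavitt.p k Q (Q.src e) * Leavitt.ed k Q e = Leavitt.ed k Q e := by
    simpa only [map_mul, Leavitt.p, Leavitt.ed] using Leavitt.mk_rel k Q (LeavittRel.src_mul e)
  rw [← hsrc, ← mul_assoc, Leavitt.p_mul_ne k Q _ _ h, zero_mul]

theorem Leavitt.gh_mul_p_of_ne {e : Q.A} {v : Q.V} (h : Q.src e ≠ v) :
    Leavitt.gh k Q e * Leavitt.p k Q v = 0 := by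
  rw [← Leavitt.gh_mul_src, mul_assoc, Leavitt.p_mul_ne k Q _ _ h, mul_zero]

theorem Leavitt.gh_mul_ed_self (e : Q.A) :
    Leavitt.gh k Q e * Leavitt.ed k Q e = Leavitt.p k Q (Q.tgt e) := by
  simpa only [map_mul, Leavitt.p, Leavitt.ed, Leavitt.gh] using
    Leavitt.mk_rel k Q (LeavittRel.ghost_mul_edge_self e)

theorem Leavitt.gh_mul_ed_of_ne {e f : Q.A} (h : e ≠ f) :
    Leavitt.gh k Q e * Leavitt.ed k Q f = 0 := by
  simpa only [map_mul, map_zero, Leavitt.ed, Leavitt.gh] using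
    Leavitt.mk_rel k Q (LeavittRel.ghost_mul_edge_ne e f h)

theorem Leavitt.sum_ed_mul_gh {v : Q.V} (hv : ¬ IsSink Q v) :
    ∑ e with Q.src e = v, Leavitt.ed k Q e * Leavitt.gh k Q e = Leavitt.p k Q v := by
  have hv' : ∃ e, Q.src e = v := by simpa only [IsSink, not_forall, not_not] using hv
  simpa only [map_sum, map_mul, Leavitt.p, Leavitt.ed, Leavitt.gh] using
    Leavitt.mk_rel k Q (LeavittRel.cuntz_krieger v hv')

variable (Q)

/-- The canonical map `P_k(Ē) → L_k(E)` as a ring homomorphism. Homomorphisms from a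
`P_k(Ē)`-module to an `L_k(E)`-module are written as maps semilinear along it. -/
noncomputable abbrev revHom : PathAlg k Q.rev →+* Leavitt k Q := (revToLeavitt k Q).toRingHom

variable {Q}

theorem revHom_p (v : Q.V) : revHom k Q (PathAlg.p k Q.rev v) = Leavitt.p k Q v := by
  change RingQuot.liftAlgHom k _ (RingQuot.mkAlgHom k _ _) = _
  rw [RingQuot.liftAlgHom_mkAlgHom_apply, FreeAlgebra.lift_ι_apply]

theorem revHom_arrow (e : Q.A) :
    revHom k Q (PathAlg.arrow k Q.rev e) = Leavitt.gh k Q e := by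
  change RingQuot.liftAlgHom k _ (RingQuot.mkAlgHom k _ _) = _
  rw [RingQuot.liftAlgHom_mkAlgHom_apply, FreeAlgebra.lift_ι_apply]

end Generators

namespace TensorPhi

open TensorProduct

variable {P L : Type} [Ring P] [Ring L] (φ : P →+* L) (M : Type) [AddCommGroup M] [Module P M]

/-- The canonical map `m ↦ 1 ⊗ m` from `M` to `L ⊗_P M`. -/
noncomputable def of : M →ₛₗ[φ] TensorPhi P L φ M where
  toFun m := (trel P L φ M).mkQ (1 ⊗ₜ m)
  map_add' m m' := by rw [tmul_add, map_add]
  map_smul' p m := by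
    rw [← map_smul, smul_tmul', smul_eq_mul, mul_one, eq_comm, ← sub_eq_zero, ← map_sub,
      Submodule.mkQ_apply, Submodule.Quotient.mk_eq_zero]
    exact Submodule.subset_span ⟨1, p, m, by rw [one_mul]⟩

theorem smul_of (l : L) (m : M) : l • of φ M m = (trel P L φ M).mkQ (l ⊗ₜ m) := by
  change l • (trel P L φ M).mkQ (1 ⊗ₜ m) = _
  rw [← map_smul, smul_tmul', smul_eq_mul, mul_one]

theorem span_range_of : Submodule.span L (Set.range (of φ M)) = ⊤ := by
  rw [eq_top_iff]
  rintro t -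
  obtain ⟨t, rfl⟩ := Submodule.mkQ_surjective _ t
  induction t with
  | zero => simp only [map_zero, zero_mem]
  | tmul l m => exact smul_of φ M l m ▸ Submodule.smul_mem _ l (Submodule.subset_span ⟨m, rfl⟩)
  | add a b ha hb => simpa only [map_add] using add_mem ha hb

variable {φ M} {T : Type*} [AddCommGroup T] [Module L T]

/-- The universal property of `L ⊗_P M`: a map `M → T` to an `L`-module that is semilinear along
`φ` extends to an `L`-linear map on `L ⊗_P M`. -/
noncomputable def lift (j : M →ₛₗ[φ] T) : TensorPhi P L φ M →ₗ[L] T :=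
  (trel P L φ M).liftQ
    (AlgebraTensorModule.lift
      { toFun := fun l => l • j.toAddMonoidHom.toIntLinearMap
        map_add' := fun a b => add_smul a b _
        map_smul' := fun a b => mul_smul a b _ })
    (Submodule.span_le.2 <| by
      rintro _ ⟨l, p, m, rfl⟩
      simp [mul_smul])

theorem lift_of (j : M →ₛₗ[φ] T) (m : M) : lift j (of φ M m) = j m :=
  one_smul L (j m)

end TensorPhi

section Semilinear

variable {k : Type} [CommRing k] {Q : FinQuiver} {N : Type*} [AddCommGroup N]
  [Module (PathAlg k Q.rev) N] {T : Type*} [AddCommGroup T] [Module (Leavitt k Q) T]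
  (j : N →ₛₗ[revHom k Q] T)

theorem p_smul_map (v : Q.V) (n : N) :
    Leavitt.p k Q v • j n = j (PathAlg.p k Q.rev v • n) := by
  rw [map_smulₛₗ, revHom_p]

theorem gh_smul_map (e : Q.A) (n : N) :
    Leavitt.gh k Q e • j n = j (PathAlg.arrow k Q.rev e • n) := by
  rw [map_smulₛₗ, revHom_arrow]

theorem algebraMap_smul_map (c : k) (n : N) :
    algebraMap k (Leavitt k Q) c • j n = j (algebraMap k (PathAlg k Q.rev) c • n) := by
  rw [map_smulₛₗ, ← (revToLeavitt k Q).commutes]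
  rfl

/-- `Descends j u` says that ghost paths starting at any vertex bring `u` into the image of `j`
after finitely many arrows, or as soon as they sit at a sink. -/
inductive Descends : T → Prop
  | map (n : N) : Descends (j n)
  | step (u : T) (ghost : ∀ e, Descends (Leavitt.gh k Q e • u))
      (sink : ∀ v, IsSink Q v → Leavitt.p k Q v • u ∈ Set.range j) : Descends u

namespace Descends

variable {j} {u u' : T}

theorem zero : Descends j 0 := map_zero j ▸ map 0

theorem gh_smul (h : Descends j u) (e : Q.A) : Descends j (Leavitt.gh k Q e • u) := by
  cases h with
  | map n => exact gh_smul_map j e n ▸ map _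
  | step _ ghost _ => exact ghost e

theorem p_smul_mem_range (h : Descends j u) {v : Q.V} (hv : IsSink Q v) :
    Leavitt.p k Q v • u ∈ Set.range j := by
  cases h with
  | map n => exact ⟨_, (p_smul_map j v n).symm⟩
  | step _ _ sink => exact sink v hv

theorem add_map (h : Descends j u) (n : N) : Descends j (u + j n) := by
  induction h generalizing n with
  | map n' => exact map_add j n' n ▸ map _
  | step u _ sink ih =>
    refine step _ (fun e => ?_) fun v hv => ?_
    · rw [smul_add, gh_smul_map]
      exact ih e _
    · obtain ⟨n', hn'⟩ := sink v hv
      exact ⟨n' + PathAlg.p k Q.rev v • n, by rw [smul_add, map_add, hn', p_smul_map]⟩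

theorem add (h : Descends j u) (h' : Descends j u') : Descends j (u + u') := by
  induction h generalizing u' with
  | map n => exact add_comm (j n) u' ▸ h'.add_map n
  | step u _ sink ih =>
    refine step _ (fun e => ?_) fun v hv => ?_
    · rw [smul_add]
      exact ih e (h'.gh_smul e)
    · obtain ⟨n, hn⟩ := sink v hv
      obtain ⟨n', hn'⟩ := h'.p_smul_mem_range hv
      exact ⟨n + n', by rw [smul_add, map_add, hn, hn']⟩

theorem algebraMap_smul (h : Descends j u) (c : k) :
    Descends j (algebraMap k (Leavitt k Q) c • u) := by
  induction h with
  | map n => exact algebraMap_smul_map j c n ▸ map _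
  | step u _ sink ih =>
    refine step _ (fun e => ?_) fun v hv => ?_
    · rw [← mul_smul, ← Algebra.commutes, mul_smul]
      exact ih e
    · obtain ⟨n, hn⟩ := sink v hv
      exact ⟨algebraMap k (PathAlg k Q.rev) c • n, by
        rw [← algebraMap_smul_map, hn, ← mul_smul, ← mul_smul, Algebra.commutes]⟩

theorem p_smul (h : Descends j u) (v : Q.V) : Descends j (Leavitt.p k Q v • u) := by
  refine step _ (fun e => ?_) fun w hw => ?_
  · rw [← mul_smul]
    by_cases hev : Q.src e = v
    · rw [← hev, Leavitt.gh_mul_src]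
      exact h.gh_smul e
    · rw [Leavitt.gh_mul_p_of_ne k hev, zero_smul]
      exact zero
  · rw [← mul_smul]
    by_cases hwv : w = v
    · rw [hwv, Leavitt.p_mul_self]
      exact h.p_smul_mem_range (hwv ▸ hw)
    · exact ⟨0, by rw [Leavitt.p_mul_ne k Q w v hwv, zero_smul, map_zero]⟩

theorem ed_smul (h : Descends j u) (e : Q.A) : Descends j (Leavitt.ed k Q e • u) := by
  refine step _ (fun f => ?_) fun v hv => ?_
  · rw [← mul_smul]
    by_cases hfe : f = e
    · rw [hfe, Leavitt.gh_mul_ed_self]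
      exact h.p_smul _
    · rw [Leavitt.gh_mul_ed_of_ne k hfe, zero_smul]
      exact zero
  · exact ⟨0, by rw [← mul_smul, Leavitt.p_mul_ed_of_ne k (hv e).symm, zero_smul, map_zero]⟩

theorem smul (h : Descends j u) (x : Leavitt k Q) : Descends j (x • u) := by
  induction x using Leavitt.induction_on generalizing u with
  | scalar c => exact h.algebraMap_smul c
  | vertex v => exact h.p_smul v
  | edge e => exact h.ed_smul e
  | ghost e => exact h.gh_smul e
  | mul a b ha hb => exact mul_smul a b u ▸ ha (hb h)
  | add a b ha hb => exact add_smul a b u ▸ (ha h).add (hb h)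

theorem of_mem_span (hu : u ∈ Submodule.span (Leavitt k Q) (Set.range j)) : Descends j u := by
  induction hu using Submodule.span_induction with
  | mem _ h => exact h.choose_spec ▸ map _
  | zero => exact zero
  | add _ _ _ _ h h' => exact h.add h'
  | smul x _ _ h => exact h.smul x

end Descends

theorem exists_p_smul_ne_zero (k : Type) [CommRing k] (Q : FinQuiver) {T : Type*}
    [AddCommGroup T] [Module (Leavitt k Q) T] {u : T} (hu : u ≠ 0) :
    ∃ v : Q.V, Leavitt.p k Q v • u ≠ 0 := by
  contrapose! hu
  rw [← one_smul (Leavitt k Q) u, ← Leavitt.sum_p, Finset.sum_smul]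
  exact Finset.sum_eq_zero fun v _ => hu v

variable {j} in
theorem Descends.exists_map_mem {u : T} (h : Descends j u) (hu : u ≠ 0)
    {U : Submodule (Leavitt k Q) T} (huU : u ∈ U) : ∃ n, j n ≠ 0 ∧ j n ∈ U := by
  induction h with
  | map n => exact ⟨n, hu, huU⟩
  | step u _ sink ih =>
    obtain ⟨v, hv⟩ := exists_p_smul_ne_zero k Q hu
    by_cases hsink : IsSink Q v
    · obtain ⟨n, hn⟩ := sink v hsink
      exact ⟨n, hn ▸ hv, hn ▸ U.smul_mem _ huU⟩
    · rw [← Leavitt.sum_ed_mul_gh k hsink, Finset.sum_smul] at hv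
      obtain ⟨e, -, he⟩ := Finset.exists_ne_zero_of_sum_ne_zero hv
      rw [mul_smul] at he
      exact ih e (right_ne_zero_of_smul he) (U.smul_mem _ huU)

theorem isSimpleModule_of_span_range_eq_top [IsSimpleModule (PathAlg k Q.rev) N]
    (hspan : Submodule.span (Leavitt k Q) (Set.range j) = ⊤) (hj : j ≠ 0) :
    IsSimpleModule (Leavitt k Q) T := by
  obtain ⟨n₀, hn₀⟩ := DFunLike.ne_iff.1 hj
  have : Nontrivial T := ⟨_, _, hn₀⟩
  rw [isSimpleModule_iff]
  refine { exists_pair_ne := ⟨⊥, ⊤, bot_ne_top⟩, eq_bot_or_eq_top := fun U => ?_ }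
  refine or_iff_not_imp_left.2 fun hU => ?_
  obtain ⟨u, huU, hu⟩ := U.ne_bot_iff.1 hU
  have hdesc : Descends j u := .of_mem_span (hspan ▸ Submodule.mem_top)
  obtain ⟨n, hn, hnU⟩ := hdesc.exists_map_mem hu huU
  have hn' : n ≠ 0 := ne_zero_of_map hn
  rw [eq_top_iff, ← hspan, Submodule.span_le]
  rintro _ ⟨m, rfl⟩
  obtain ⟨x, rfl⟩ := IsSimpleModule.toSpanSingleton_surjective (PathAlg k Q.rev) hn' m
  rw [LinearMap.toSpanSingleton_apply, map_smulₛₗ]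
  exact U.smul_mem _ hnU

end Semilinear

section GhostNull

variable (k : Type) [CommRing k] {Q : FinQuiver} {N N' : Type*} [AddCommGroup N]
  [Module (PathAlg k Q.rev) N] [AddCommGroup N'] [Module (PathAlg k Q.rev) N'] {v : Q.V} {n : N}

/-- `IsGhostNull k v n` says that `n` lies in `p_v N` and that every ghost arrow `ē` with
`s(e) = v` kills it. These vectors are the images of the class of `p_v` under the homomorphisms
`coker ν_v → N`. -/
structure IsGhostNull (v : Q.V) (n : N) : Prop where
  p_smul : PathAlg.p k Q.rev v • n = n
  arrow_smul : ∀ e, Q.src e = v → PathAlg.arrow k Q.rev e • n = 0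

variable {k}

theorem IsGhostNull.map (h : IsGhostNull k v n) (f : N →ₗ[PathAlg k Q.rev] N') :
    IsGhostNull k v (f n) where
  p_smul := by rw [← map_smul, h.p_smul]
  arrow_smul e he := by rw [← map_smul, h.arrow_smul e he, map_zero]

theorem IsGhostNull.exists_smul_eq (h : IsGhostNull k v n) (x : PathAlg k Q.rev) :
    ∃ c : k, x • n = algebraMap k (PathAlg k Q.rev) c • n := by
  induction x using PathAlg.rev_induction_on with
  | scalar c => exact ⟨c, rfl⟩
  | vertex w =>
    by_cases hwv : w = v
    · exact ⟨1, by rw [hwv, h.p_smul, map_one, one_smul]⟩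
    · refine ⟨0, ?_⟩
      rw [← h.p_smul, ← mul_smul, PathAlg.rev_p_mul_p_of_ne k hwv, zero_smul, map_zero, zero_smul]
  | ghost e =>
    refine ⟨0, ?_⟩
    rw [map_zero, zero_smul]
    by_cases hev : Q.src e = v
    · exact h.arrow_smul e hev
    · rw [← h.p_smul, ← mul_smul, PathAlg.rev_arrow_mul_p_of_ne k hev, zero_smul]
  | mul a b ha hb =>
    obtain ⟨c, hc⟩ := ha
    obtain ⟨d, hd⟩ := hb
    exact ⟨d * c, by rw [mul_smul, hd, ← mul_smul, ← Algebra.commutes, mul_smul, hc, map_mul,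
      mul_smul]⟩
  | add a b ha hb =>
    obtain ⟨c, hc⟩ := ha
    obtain ⟨d, hd⟩ := hb
    exact ⟨c + d, by rw [add_smul, hc, hd, map_add, add_smul]⟩

theorem IsGhostNull.map_eq_zero (h : IsGhostNull k v n) (hv : ¬ IsSink Q v) {T : Type*}
    [AddCommGroup T] [Module (Leavitt k Q) T] (j : N →ₛₗ[revHom k Q] T) : j n = 0 := by
  rw [← h.p_smul, ← p_smul_map, ← Leavitt.sum_ed_mul_gh k hv, Finset.sum_smul]
  refine Finset.sum_eq_zero fun e he => ?_
  rw [mul_smul, gh_smul_map, h.arrow_smul e (Finset.mem_filter.1 he).2, map_zero, smul_zero]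

variable (k) in
theorem p_mem_pIdeal (v : Q.V) : PathAlg.p k Q.rev v ∈ pIdeal k Q v :=
  ⟨PathAlg.p k Q.rev v, PathAlg.rev_p_mul_p_self k v⟩

variable (k) in
/-- The class of `p_v`, which generates `coker ν_v`. -/
noncomputable def cokerGen (v : Q.V) : CokerNu k Q v :=
  (LinearMap.range (nu k Q v)).mkQ ⟨PathAlg.p k Q.rev v, p_mem_pIdeal k v⟩

theorem exists_smul_cokerGen_eq (x : CokerNu k Q v) :
    ∃ r : PathAlg k Q.rev, r • cokerGen k v = x := by
  obtain ⟨⟨_, r, rfl⟩, rfl⟩ := Submodule.mkQ_surjective _ x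
  exact ⟨r, by rw [cokerGen, ← map_smul]; rfl⟩

theorem arrow_smul_cokerGen (e : Q.A) :
    PathAlg.arrow k Q.rev e • cokerGen k (Q.src e) = 0 := by
  rw [cokerGen, ← map_smul, Submodule.mkQ_apply, Submodule.Quotient.mk_eq_zero]
  refine ⟨Pi.single ⟨e, rfl⟩ ⟨PathAlg.p k Q.rev (Q.tgt e), p_mem_pIdeal k _⟩, Subtype.ext ?_⟩
  change ∑ f : {f : Q.A // Q.src f = Q.src e}, _ =
    PathAlg.arrow k Q.rev e * PathAlg.p k Q.rev (Q.src e)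
  rw [Fintype.sum_eq_single ⟨e, rfl⟩ fun f hf => by rw [Pi.single_eq_of_ne hf]; exact zero_mul _,
    Pi.single_eq_same, PathAlg.rev_arrow_mul_p_src]
  exact PathAlg.rev_p_tgt_mul_arrow k e

theorem isGhostNull_cokerGen (v : Q.V) : IsGhostNull k v (cokerGen k v) where
  p_smul := by
    rw [cokerGen, ← map_smul]
    exact congrArg _ (Subtype.ext (PathAlg.rev_p_mul_p_self k v))
  arrow_smul e he := he ▸ arrow_smul_cokerGen e

/-- The homomorphism `coker ν_v → N` that sends the class of `p_v` to a given ghost-null vector. -/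
noncomputable def IsGhostNull.ofCokerNu (h : IsGhostNull k v n) :
    CokerNu k Q v →ₗ[PathAlg k Q.rev] N :=
  (LinearMap.range (nu k Q v)).liftQ
    (LinearMap.toSpanSingleton (PathAlg k Q.rev) N n ∘ₗ (pIdeal k Q v).subtype) <| by
      rintro _ ⟨x, rfl⟩
      change (∑ e : {e : Q.A // Q.src e = v},
        (x e : PathAlg k Q.rev) * PathAlg.arrow k Q.rev e.1) • n = 0
      rw [Finset.sum_smul]
      refine Finset.sum_eq_zero fun e _ => ?_
      rw [mul_smul, h.arrow_smul e.1 e.2, smul_zero]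

theorem IsGhostNull.ofCokerNu_cokerGen (h : IsGhostNull k v n) :
    h.ofCokerNu (cokerGen k v) = n :=
  h.p_smul

end GhostNull

section Field

variable {k : Type} [Field k] {Q : FinQuiver} {N : Type*} [AddCommGroup N]
  [Module (PathAlg k Q.rev) N] {v : Q.V}

theorem IsGhostNull.ofCokerNu_injective {n : N} (h : IsGhostNull k v n) (hn : n ≠ 0) :
    Function.Injective h.ofCokerNu := by
  rw [injective_iff_map_eq_zero]
  intro x hx
  obtain ⟨r, rfl⟩ := exists_smul_cokerGen_eq x
  obtain ⟨c, hc⟩ := (isGhostNull_cokerGen v).exists_smul_eq r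
  rw [hc, map_smul, h.ofCokerNu_cokerGen] at hx
  obtain rfl : c = 0 := by
    by_contra hc0
    refine hn ?_
    rw [← one_smul (PathAlg k Q.rev) n, ← map_one (algebraMap k _), ← inv_mul_cancel₀ hc0, map_mul,
      mul_smul, hx, smul_zero]
  rw [hc, map_zero, zero_smul]

theorem nonempty_linearEquiv_cokerNu_iff [IsSimpleModule (PathAlg k Q.rev) N] :
    Nonempty (N ≃ₗ[PathAlg k Q.rev] CokerNu k Q v) ↔ ∃ n : N, n ≠ 0 ∧ IsGhostNull k v n := by
  constructor
  · rintro ⟨ψ⟩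
    have : Nontrivial N := IsSimpleModule.nontrivial (PathAlg k Q.rev) N
    obtain ⟨m, hm⟩ := exists_ne (0 : N)
    refine ⟨ψ.symm (cokerGen k v), fun h0 => hm ?_, (isGhostNull_cokerGen v).map ψ.symm.toLinearMap⟩
    obtain ⟨r, hr⟩ := exists_smul_cokerGen_eq (ψ m)
    rw [← ψ.symm_apply_apply m, ← hr, map_smul, h0, smul_zero]
  · rintro ⟨n, hn, h⟩
    refine ⟨(LinearEquiv.ofBijective h.ofCokerNu ⟨h.ofCokerNu_injective hn, fun m => ?_⟩).symm⟩
    obtain ⟨r, rfl⟩ := IsSimpleModule.toSpanSingleton_surjective (PathAlg k Q.rev) hn m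
    exact ⟨r • cokerGen k v, by rw [map_smul, h.ofCokerNu_cokerGen]; rfl⟩

end Field

section LeavittFamily

/-- Elements of a ring `A` that satisfy the defining relations of the Leavitt path algebra of
`Q`; by `LeavittFamily.lift` this is the same as a `k`-algebra map `L_k(E) → A`. -/
structure LeavittFamily (Q : FinQuiver) (A : Type*) [Ring A] where
  vert : Q.V → A
  edge : Q.A → A
  ghost : Q.A → A
  complete : CompleteOrthogonalIdempotents vert
  vert_src_mul_edge : ∀ e, vert (Q.src e) * edge e = edge e
  edge_mul_vert_tgt : ∀ e, edge e * vert (Q.tgt e) = edge e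
  vert_tgt_mul_ghost : ∀ e, vert (Q.tgt e) * ghost e = ghost e
  ghost_mul_vert_src : ∀ e, ghost e * vert (Q.src e) = ghost e
  ghost_mul_edge_self : ∀ e, ghost e * edge e = vert (Q.tgt e)
  ghost_mul_edge_of_ne : ∀ e f, e ≠ f → ghost e * edge f = 0
  sum_edge_mul_ghost : ∀ v, ¬ IsSink Q v → ∑ e with Q.src e = v, edge e * ghost e = vert v

namespace LeavittFamily

variable (k : Type) [CommRing k] {Q : FinQuiver} {A : Type*} [Ring A] [Algebra k A]
  (F : LeavittFamily Q A)

/-- The value of a Leavitt family on the generators of the Leavitt path algebra. -/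
def onGen : LGen Q → A
  | .vertex v => F.vert v
  | .edge e => F.edge e
  | .ghost e => F.ghost e

theorem lift_rel {x y : FreeAlgebra k (LGen Q)} (h : LeavittRel k Q x y) :
    FreeAlgebra.lift k F.onGen x = FreeAlgebra.lift k F.onGen y := by
  induction h <;>
    simp only [map_mul, map_sum, map_one, map_zero, FreeAlgebra.lift_ι_apply, onGen]
  case vertex_mul_self v => exact F.complete.idem v
  case vertex_mul_ne v w h => exact F.complete.ortho h
  case sum_vertex => exact F.complete.complete
  case src_mul e => exact F.vert_src_mul_edge e
  case mul_tgt e => exact F.edge_mul_vert_tgt e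
  case tgt_mul_ghost e => exact F.vert_tgt_mul_ghost e
  case ghost_mul_src e => exact F.ghost_mul_vert_src e
  case ghost_mul_edge_self e => exact F.ghost_mul_edge_self e
  case ghost_mul_edge_ne e f h => exact F.ghost_mul_edge_of_ne e f h
  case cuntz_krieger v h => exact F.sum_edge_mul_ghost v fun hv => h.elim hv

/-- The algebra map out of the Leavitt path algebra given by a Leavitt family. -/
noncomputable def lift : Leavitt k Q →ₐ[k] A :=
  RingQuot.liftAlgHom k ⟨FreeAlgebra.lift k F.onGen, fun _ _ => F.lift_rel k⟩

theorem lift_mk (x : FreeAlgebra k (LGen Q)) :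
    F.lift k (Leavitt.mk k Q x) = FreeAlgebra.lift k F.onGen x :=
  RingQuot.liftAlgHom_mkAlgHom_apply ..

theorem lift_p (v : Q.V) : F.lift k (Leavitt.p k Q v) = F.vert v :=
  (F.lift_mk k _).trans (FreeAlgebra.lift_ι_apply ..)

theorem lift_gh (e : Q.A) : F.lift k (Leavitt.gh k Q e) = F.ghost e :=
  (F.lift_mk k _).trans (FreeAlgebra.lift_ι_apply ..)

end LeavittFamily

end LeavittFamily

section BlockOp

variable {k : Type*} [CommRing k] {ι M : Type*} [DecidableEq ι] [AddCommGroup M] [Module k M]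

/-- `blockOp i j t` is the endomorphism of `ι → M` whose block matrix has `t` in position `(i, j)`
and zeros elsewhere. -/
def blockOp (i j : ι) : Module.End k M →ₗ[k] Module.End k (ι → M) where
  toFun t := LinearMap.single k (fun _ => M) i ∘ₗ t ∘ₗ LinearMap.proj j
  map_add' s t := by rw [LinearMap.add_comp, LinearMap.comp_add]
  map_smul' c t := by rw [LinearMap.smul_comp, LinearMap.comp_smul, RingHom.id_apply]

theorem blockOp_apply (i j : ι) (t : Module.End k M) (f : ι → M) :
    blockOp i j t f = Pi.single i (t (f j)) :=
  rfl

theorem blockOp_mul_blockOp (i j l : ι) (s t : Module.End k M) :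
    blockOp i j s * blockOp j l t = blockOp i l (s * t) := by
  ext1 f
  simp only [Module.End.mul_apply, blockOp_apply, Pi.single_eq_same]

theorem blockOp_mul_blockOp_of_ne {j j' : ι} (h : j ≠ j') (i l : ι) (s t : Module.End k M) :
    blockOp i j s * blockOp j' l t = 0 := by
  ext1 f
  simp only [Module.End.mul_apply, blockOp_apply, Pi.single_eq_of_ne h, map_zero, Pi.single_zero,
    LinearMap.zero_apply]

theorem sum_blockOp_one [Fintype ι] : ∑ i : ι, blockOp i i (1 : Module.End k M) = 1 := by
  refine LinearMap.ext fun f => ?_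
  rw [LinearMap.sum_apply]
  exact Finset.univ_sum_single f

end BlockOp

section PathOperators

variable (k : Type*) [CommRing k] {A : Type*} (N : Type*) [AddCommGroup N] [Module k N]

/-- Left translation of functions on words: the value at `l` is read off at `e :: l`. -/
def consPullback (e : A) : Module.End k (List A → N) :=
  LinearMap.funLeft k N (List.cons e)

variable {k N} in
theorem consPullback_apply (e : A) (g : List A → N) (l : List A) :
    consPullback k N e g l = g (e :: l) :=
  rfl

variable [DecidableEq A]

/-- The right inverse of `consPullback e` that extends by zero outside the words `e :: l`. -/
def consExtend (e : A) : Module.End k (List A → N) where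
  toFun g
    | [] => 0
    | f :: l => if f = e then g l else 0
  map_add' g g' := by
    ext (_ | ⟨f, l⟩)
    · exact (add_zero 0).symm
    · by_cases h : f = e <;> simp [h]
  map_smul' c g := by
    ext (_ | ⟨f, l⟩)
    · exact (smul_zero c).symm
    · by_cases h : f = e <;> simp [h]

variable {k N}

theorem consExtend_cons (e f : A) (g : List A → N) (l : List A) :
    consExtend k N e g (f :: l) = if f = e then g l else 0 :=
  rfl

variable (k N)

theorem consPullback_mul_consExtend_self (e : A) :
    consPullback k N e * consExtend k N e = 1 := by
  ext g l
  exact if_pos rfl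

theorem consPullback_mul_consExtend_of_ne {e f : A} (h : e ≠ f) :
    consPullback k N e * consExtend k N f = 0 := by
  ext g l
  exact if_neg h

theorem sum_consExtend_mul_consPullback_cons (s : Finset A) (g : List A → N) (e : A)
    (l : List A) :
    (∑ f ∈ s, consExtend k N f * consPullback k N f) g (e :: l) =
      if e ∈ s then g (e :: l) else 0 := by
  simp only [LinearMap.sum_apply, Finset.sum_apply, Module.End.mul_apply, consExtend_cons,
    consPullback_apply, Finset.sum_ite_eq]

end PathOperators

theorem mapQ_mul_mapQ {R M : Type*} [Ring R] [AddCommGroup M] [Module R M] {W : Submodule R M}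
    {s t u : Module.End R M} (hs : W ≤ W.comap s) (ht : W ≤ W.comap t) (hu : W ≤ W.comap u)
    (h : s * t = u) : W.mapQ W s hs * W.mapQ W t ht = W.mapQ W u hu := by
  subst h
  exact (W.mapQ_comp W W t s ht hs).symm

section Germs

variable (k : Type) [CommRing k] (Q : FinQuiver) (N : Type*) [AddCommGroup N] [Module k N]

/-- `IsDeep Q m v l` says that `l` is a path of `Q` starting at `v` that has length at least `m`
or ends at a sink. The truncation of `m - 1` is intended: every path has length at least `0`. -/
def IsDeep (m : ℕ) (v : Q.V) : List Q.A → Prop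
  | [] => m = 0 ∨ IsSink Q v
  | e :: l => Q.src e = v ∧ IsDeep (m - 1) (Q.tgt e) l

variable {Q} in
theorem IsDeep.anti {m m' : ℕ} (hm : m ≤ m') {v : Q.V} {l : List Q.A} (h : IsDeep Q m' v l) :
    IsDeep Q m v l := by
  induction l generalizing m m' v with
  | nil => exact h.imp_left fun hm' => by lia
  | cons e l ih => exact ⟨h.1, ih (Nat.sub_le_sub_right hm 1) h.2⟩

/-- Families of `N`-valued functions on words of arrows, one for each vertex. The word is meant
to be a path starting at that vertex; the values at other words disappear in `Germ`. -/
abbrev PathFun : Type _ := Q.V → List Q.A → N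

/-- The families of functions that vanish on all sufficiently deep paths. -/
def deepVanishing : Submodule k (PathFun Q N) where
  carrier := {f | ∃ m, ∀ v l, IsDeep Q m v l → f v l = 0}
  zero_mem' := ⟨0, fun _ _ _ => rfl⟩
  add_mem' := by
    rintro f g ⟨m, hm⟩ ⟨m', hm'⟩
    refine ⟨max m m', fun v l h => ?_⟩
    change f v l + g v l = 0
    rw [hm v l (h.anti (le_max_left ..)), hm' v l (h.anti (le_max_right ..)), add_zero]
  smul_mem' := by
    rintro c f ⟨m, hm⟩
    refine ⟨m, fun v l h => ?_⟩
    change c • f v l = 0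
    rw [hm v l h, smul_zero]

variable {Q N} in
theorem deepVanishing_le_comap_blockOp {u v : Q.V} {t : Module.End k (List Q.A → N)}
    (ht : ∀ m g, (∀ l, IsDeep Q m v l → g l = 0) → ∀ l, IsDeep Q (m + 1) u l → t g l = 0) :
    deepVanishing k Q N ≤ (deepVanishing k Q N).comap (blockOp u v t) := by
  rintro f ⟨m, hm⟩
  refine ⟨m + 1, fun w l h => ?_⟩
  rw [blockOp_apply]
  obtain rfl | hw := eq_or_ne w u
  · rw [Pi.single_eq_same]
    exact ht m (f v) (hm v) l h
  · rw [Pi.single_eq_of_ne hw]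
    rfl

theorem deepVanishing_le_comap_vert (v : Q.V) :
    deepVanishing k Q N ≤ (deepVanishing k Q N).comap (blockOp v v 1) :=
  deepVanishing_le_comap_blockOp k fun _ _ hg l hl => hg l (hl.anti (Nat.le_succ _))

theorem deepVanishing_le_comap_edge (e : Q.A) : deepVanishing k Q N ≤
    (deepVanishing k Q N).comap (blockOp (Q.src e) (Q.tgt e) (consExtend k N e)) := by
  refine deepVanishing_le_comap_blockOp k fun m g hg l hl => ?_
  cases l with
  | nil => rfl
  | cons f l =>
    rw [consExtend_cons]
    split_ifs with hfe
    · exact hg l (hfe ▸ hl.2)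
    · rfl

theorem deepVanishing_le_comap_ghost (e : Q.A) : deepVanishing k Q N ≤
    (deepVanishing k Q N).comap (blockOp (Q.tgt e) (Q.src e) (consPullback k N e)) :=
  deepVanishing_le_comap_blockOp k fun m _ hg l hl => hg (e :: l) ⟨rfl, hl.anti (by lia)⟩

theorem blockOp_sum_sub_one_apply_mem_deepVanishing {v : Q.V} (hv : ¬ IsSink Q v)
    (f : PathFun Q N) :
    blockOp v v (∑ e with Q.src e = v, consExtend k N e * consPullback k N e - 1) f ∈
      deepVanishing k Q N := by
  refine ⟨1, fun w l hl => ?_⟩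
  rw [blockOp_apply]
  obtain rfl | hw := eq_or_ne w v
  · rw [Pi.single_eq_same]
    cases l with
    | nil => exact (hl.elim one_ne_zero hv).elim
    | cons e l =>
      rw [LinearMap.sub_apply, Pi.sub_apply, sum_consExtend_mul_consPullback_cons,
        if_pos (Finset.mem_filter.2 ⟨Finset.mem_univ e, hl.1⟩)]
      exact sub_self _
  · rw [Pi.single_eq_of_ne hw]
    rfl

theorem sum_edge_mul_ghost_eq_blockOp (v : Q.V) :
    ∑ e with Q.src e = v, blockOp (Q.src e) (Q.tgt e) (consExtend k N e) *
        blockOp (Q.tgt e) (Q.src e) (consPullback k N e) =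
      blockOp v v (∑ e with Q.src e = v, consExtend k N e * consPullback k N e) := by
  rw [map_sum]
  refine Finset.sum_congr rfl fun e he => ?_
  rw [blockOp_mul_blockOp, (Finset.mem_filter.1 he).2]

/-- Germs at infinity of functions on the paths of `Q`. -/
abbrev Germ : Type _ := PathFun Q N ⧸ deepVanishing k Q N

/-- The Leavitt family of operators on germs. -/
def germFamily : LeavittFamily Q (Module.End k (Germ k Q N)) where
  vert v := Submodule.mapQ _ _ _ (deepVanishing_le_comap_vert k Q N v)
  edge e := Submodule.mapQ _ _ _ (deepVanishing_le_comap_edge k Q N e)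
  ghost e := Submodule.mapQ _ _ _ (deepVanishing_le_comap_ghost k Q N e)
  complete :=
    { idem v := mapQ_mul_mapQ _ _ _ (by rw [blockOp_mul_blockOp, one_mul])
      ortho v w hvw := (mapQ_mul_mapQ _ _ _ (blockOp_mul_blockOp_of_ne hvw ..)).trans
        (Submodule.mapQ_zero ..)
      complete := by
        refine Submodule.linearMap_qext _ (LinearMap.ext fun f => ?_)
        have hgerm := congrArg (deepVanishing k Q N).mkQ
          (LinearMap.congr_fun (sum_blockOp_one (k := k)) f)
        rw [LinearMap.sum_apply, map_sum] at hgerm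
        rw [LinearMap.comp_apply, LinearMap.sum_apply]
        exact hgerm }
  vert_src_mul_edge e := mapQ_mul_mapQ _ _ _ (by rw [blockOp_mul_blockOp, one_mul])
  edge_mul_vert_tgt e := mapQ_mul_mapQ _ _ _ (by rw [blockOp_mul_blockOp, mul_one])
  vert_tgt_mul_ghost e := mapQ_mul_mapQ _ _ _ (by rw [blockOp_mul_blockOp, one_mul])
  ghost_mul_vert_src e := mapQ_mul_mapQ _ _ _ (by rw [blockOp_mul_blockOp, mul_one])
  ghost_mul_edge_self e := mapQ_mul_mapQ _ _ _ (by
    rw [blockOp_mul_blockOp, consPullback_mul_consExtend_self])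
  ghost_mul_edge_of_ne e f hef := by
    refine (mapQ_mul_mapQ _ _ _ ?_).trans (Submodule.mapQ_zero ..)
    obtain htgt | htgt := eq_or_ne (Q.src e) (Q.src f)
    · rw [htgt, blockOp_mul_blockOp, consPullback_mul_consExtend_of_ne k N hef, map_zero]
    · exact blockOp_mul_blockOp_of_ne htgt ..
  sum_edge_mul_ghost v hv := by
    refine Submodule.linearMap_qext _ (LinearMap.ext fun f => ?_)
    have hgerm := (Submodule.Quotient.mk_eq_zero _).2
      (blockOp_sum_sub_one_apply_mem_deepVanishing k Q N hv f)
    rw [map_sub, ← sum_edge_mul_ghost_eq_blockOp, LinearMap.sub_apply, ← Submodule.mkQ_apply,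
      map_sub, sub_eq_zero, LinearMap.sum_apply, map_sum] at hgerm
    rw [LinearMap.comp_apply, LinearMap.sum_apply]
    exact hgerm

noncomputable instance : Module (Leavitt k Q) (Germ k Q N) :=
  Module.compHom _ ((germFamily k Q N).lift k).toRingHom

variable {k Q N}

theorem leavitt_smul_germ (x : Leavitt k Q) (g : Germ k Q N) :
    x • g = (germFamily k Q N).lift k x g :=
  rfl

theorem algebraMap_smul_germ (c : k) (g : Germ k Q N) :
    algebraMap k (Leavitt k Q) c • g = c • g := by
  rw [leavitt_smul_germ, AlgHom.commutes, Module.algebraMap_end_apply]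

theorem p_smul_mkQ (v : Q.V) (f : PathFun Q N) :
    Leavitt.p k Q v • (deepVanishing k Q N).mkQ f =
      (deepVanishing k Q N).mkQ (Pi.single v (f v)) := by
  rw [leavitt_smul_germ, LeavittFamily.lift_p]
  rfl

theorem gh_smul_mkQ (e : Q.A) (f : PathFun Q N) :
    Leavitt.gh k Q e • (deepVanishing k Q N).mkQ f =
      (deepVanishing k Q N).mkQ (Pi.single (Q.tgt e) fun l => f (Q.src e) (e :: l)) := by
  rw [leavitt_smul_germ, LeavittFamily.lift_gh]
  rfl

end Germs

section GhostWords

variable (k : Type) [CommRing k] {Q : FinQuiver} {N : Type*} [AddCommGroup N]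
  [Module (PathAlg k Q.rev) N]

/-- The product of the ghost arrows of a word, the first letter acting first. -/
noncomputable def ghostWord : List Q.A → PathAlg k Q.rev
  | [] => 1
  | e :: l => ghostWord l * PathAlg.arrow k Q.rev e

theorem ghostWord_cons (e : Q.A) (l : List Q.A) :
    ghostWord k (e :: l) = ghostWord k l * PathAlg.arrow k Q.rev e :=
  rfl

variable (Q N) in
/-- The additive map that sends `n` to the functions `l ↦ l̄ p_v n` on words. -/
noncomputable def ghostValues : N →+ PathFun Q N where
  toFun n v l := ghostWord k l • PathAlg.p k Q.rev v • n
  map_zero' := by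
    ext v l
    rw [smul_zero, smul_zero]
    rfl
  map_add' n n' := by
    ext v l
    rw [smul_add, smul_add]
    rfl

theorem ghostValues_apply (n : N) (v : Q.V) (l : List Q.A) :
    ghostValues k Q N n v l = ghostWord k l • PathAlg.p k Q.rev v • n :=
  rfl

theorem ghostValues_nil (n : N) (v : Q.V) :
    ghostValues k Q N n v [] = PathAlg.p k Q.rev v • n :=
  one_smul _ _

theorem ghostValues_p_smul (v : Q.V) (n : N) :
    ghostValues k Q N (PathAlg.p k Q.rev v • n) = Pi.single v (ghostValues k Q N n v) := by
  ext w l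
  rw [ghostValues_apply, ← mul_smul (PathAlg.p k Q.rev w)]
  obtain rfl | hw := eq_or_ne w v
  · rw [PathAlg.rev_p_mul_p_self, Pi.single_eq_same, ghostValues_apply]
  · rw [PathAlg.rev_p_mul_p_of_ne k hw, zero_smul, smul_zero, Pi.single_eq_of_ne hw]
    rfl

theorem ghostValues_arrow_smul (e : Q.A) (n : N) :
    ghostValues k Q N (PathAlg.arrow k Q.rev e • n) =
      Pi.single (Q.tgt e) fun l => ghostValues k Q N n (Q.src e) (e :: l) := by
  ext w l
  rw [ghostValues_apply, ← mul_smul (PathAlg.p k Q.rev w)]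
  obtain rfl | hw := eq_or_ne w (Q.tgt e)
  · rw [Pi.single_eq_same, ghostValues_apply, ghostWord_cons, PathAlg.rev_p_tgt_mul_arrow,
      ← mul_smul, ← mul_smul, mul_assoc, PathAlg.rev_arrow_mul_p_src]
  · rw [PathAlg.rev_p_mul_arrow_of_ne k hw, zero_smul, smul_zero, Pi.single_eq_of_ne hw]
    rfl

theorem p_smul_eq_zero_of_ghostValues
    (hN : ∀ v, ¬ IsSink Q v → ∀ n : N, IsGhostNull k v n → n = 0) {m : ℕ} {v : Q.V} {n : N}
    (h : ∀ l, IsDeep Q m v l → ghostValues k Q N n v l = 0) : PathAlg.p k Q.rev v • n = 0 := by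
  induction m generalizing v n with
  | zero => exact ghostValues_nil k n v ▸ h [] (.inl rfl)
  | succ m ih =>
    by_cases hv : IsSink Q v
    · exact ghostValues_nil k n v ▸ h [] (.inr hv)
    refine hN v hv _ ⟨by rw [← mul_smul, PathAlg.rev_p_mul_p_self], ?_⟩
    rintro e rfl
    have htgt : PathAlg.p k Q.rev (Q.tgt e) • PathAlg.arrow k Q.rev e • n = 0 := by
      refine ih fun l hl => ?_
      rw [ghostValues_arrow_smul, Pi.single_eq_same]
      exact h (e :: l) ⟨rfl, hl⟩
    rwa [← mul_smul, PathAlg.rev_p_tgt_mul_arrow, ← PathAlg.rev_arrow_mul_p_src, mul_smul] at htgt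

variable [Module k N] [IsScalarTower k (PathAlg k Q.rev) N]

theorem ghostValues_smul (c : k) (n : N) :
    ghostValues k Q N (c • n) = c • ghostValues k Q N n := by
  ext v l
  rw [Pi.smul_apply, Pi.smul_apply, ghostValues_apply, ghostValues_apply,
    smul_comm (PathAlg.p k Q.rev v), smul_comm (ghostWord k l)]

theorem revHom_smul_mkQ_ghostValues (x : PathAlg k Q.rev) (n : N) :
    revHom k Q x • (deepVanishing k Q N).mkQ (ghostValues k Q N n) =
      (deepVanishing k Q N).mkQ (ghostValues k Q N (x • n)) := by
  induction x using PathAlg.rev_induction_on generalizing n with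
  | scalar c =>
    rw [algebraMap_smul, ghostValues_smul, map_smul, ← algebraMap_smul_germ,
      ← (revToLeavitt k Q).commutes]
    rfl
  | vertex v => rw [revHom_p, p_smul_mkQ, ghostValues_p_smul]
  | ghost e => rw [revHom_arrow, gh_smul_mkQ, ghostValues_arrow_smul]
  | mul a b ha hb => rw [map_mul, mul_smul, hb, ha, mul_smul]
  | add a b ha hb => rw [map_add, add_smul, ha, hb, add_smul, map_add, map_add]

variable (Q N) in
/-- The map that sends `n` to the germ of the function `l ↦ l̄ n` on paths. -/
noncomputable def toGerm : N →ₛₗ[revHom k Q] Germ k Q N where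
  toFun n := (deepVanishing k Q N).mkQ (ghostValues k Q N n)
  map_add' n n' := by rw [map_add, map_add]
  map_smul' x n := (revHom_smul_mkQ_ghostValues k x n).symm

theorem toGerm_injective (hN : ∀ v, ¬ IsSink Q v → ∀ n : N, IsGhostNull k v n → n = 0) :
    Function.Injective (toGerm k Q N) := by
  rw [injective_iff_map_eq_zero]
  intro n hn
  obtain ⟨m, hm⟩ := (Submodule.Quotient.mk_eq_zero _).1 hn
  rw [← one_smul (PathAlg k Q.rev) n, ← PathAlg.sum_p, Finset.sum_smul]
  exact Finset.sum_eq_zero fun v _ => p_smul_eq_zero_of_ghostValues k hN (hm v)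

end GhostWords

section Main

variable {k : Type} [CommRing k] {Q : FinQuiver} {N : Type} [AddCommGroup N]
  [Module (PathAlg k Q.rev) N] [IsSimpleModule (PathAlg k Q.rev) N]

theorem subsingleton_tensorPhi {v : Q.V} (hv : ¬ IsSink Q v) {n : N} (hn : n ≠ 0)
    (h : IsGhostNull k v n) :
    Subsingleton (TensorPhi (PathAlg k Q.rev) (Leavitt k Q) (revHom k Q) N) := by
  rw [← Submodule.subsingleton_iff (Leavitt k Q), ← subsingleton_iff_bot_eq_top,
    ← TensorPhi.span_range_of, eq_comm, Submodule.span_eq_bot]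
  rintro _ ⟨m, rfl⟩
  obtain ⟨x, rfl⟩ := IsSimpleModule.toSpanSingleton_surjective (PathAlg k Q.rev) hn m
  rw [LinearMap.toSpanSingleton_apply, map_smulₛₗ, h.map_eq_zero hv, smul_zero]

theorem isSimpleModule_tensorPhi
    (hN : ∀ v, ¬ IsSink Q v → ∀ n : N, IsGhostNull k v n → n = 0) :
    IsSimpleModule (Leavitt k Q)
      (TensorPhi (PathAlg k Q.rev) (Leavitt k Q) (revHom k Q) N) := by
  let : Module k N := Module.compHom N (algebraMap k (PathAlg k Q.rev))
  have : IsScalarTower k (PathAlg k Q.rev) N := .of_algebraMap_smul fun _ _ => rfl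
  have : Nontrivial N := IsSimpleModule.nontrivial (PathAlg k Q.rev) N
  obtain ⟨n, hn⟩ := exists_ne (0 : N)
  refine isSimpleModule_of_span_range_eq_top _ (TensorPhi.span_range_of ..) fun h0 => hn ?_
  refine toGerm_injective k hN ?_
  rw [← TensorPhi.lift_of (toGerm k Q N) n, h0, map_zero]
  exact map_zero _

end Main

end LPA

open LPA in
theorem statement_14_general (k : Type) [Field k] (Q : FinQuiver) (N : Type) [AddCommGroup N]
    [Module (PathAlg k Q.rev) N] [IsSimpleModule (PathAlg k Q.rev) N] :
    ((∃ v : Q.V, ¬ IsSink Q v ∧ Nonempty (N ≃ₗ[PathAlg k Q.rev] CokerNu k Q v)) →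
      Subsingleton
        (TensorPhi (PathAlg k Q.rev) (Leavitt k Q) (revToLeavitt k Q).toRingHom N)) ∧
    ((∀ v : Q.V, ¬ IsSink Q v → IsEmpty (N ≃ₗ[PathAlg k Q.rev] CokerNu k Q v)) →
      IsSimpleModule (Leavitt k Q)
        (TensorPhi (PathAlg k Q.rev) (Leavitt k Q) (revToLeavitt k Q).toRingHom N)) := by
  simp only [← not_nonempty_iff, nonempty_linearEquiv_cokerNu_iff]
  constructor
  · rintro ⟨v, hv, n, hn, h⟩
    exact subsingleton_tensorPhi hv hn h
  · intro hN
    refine isSimpleModule_tensorPhi fun v hv n h => ?_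
    by_contra hn
    exact hN v hv ⟨n, hn, h⟩

open LPA in
/-- Let `N` be a finite-dimensional simple left `P_k(Ē)`-module.  Exactly one of
the following holds: (1) `N ≅ coker ν_i` for some non-sink vertex `i`, and then
`L_k(E) ⊗_{P_k(Ē)} N = 0`; or (2) `N` is not isomorphic to any `coker ν_i` with `i` a
non-sink, and then `L_k(E) ⊗_{P_k(Ē)} N` is a simple left `L_k(E)`-module. -/
theorem statement_14 (k : Type) [Field k] (Q : FinQuiver) (N : Type) [AddCommGroup N]
    [Module (PathAlg k Q.rev) N] [Module k N] [IsScalarTower k (PathAlg k Q.rev) N]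
    [IsSimpleModule (PathAlg k Q.rev) N] [FiniteDimensional k N] :
    ((∃ v : Q.V, ¬ IsSink Q v ∧ Nonempty (N ≃ₗ[PathAlg k Q.rev] CokerNu k Q v)) →
      Subsingleton
        (TensorPhi (PathAlg k Q.rev) (Leavitt k Q) (revToLeavitt k Q).toRingHom N)) ∧
    ((∀ v : Q.V, ¬ IsSink Q v → IsEmpty (N ≃ₗ[PathAlg k Q.rev] CokerNu k Q v)) →
      IsSimpleModule (Leavitt k Q)
        (TensorPhi (PathAlg k Q.rev) (Leavitt k Q) (revToLeavitt k Q).toRingHom N)) :=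
  statement_14_general k Q N
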